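/- Let F, G ∈ ℝ with F > 1, G > 1, F² ≥ G, and G² ≥ F. Define C₀ : ℝ → ℝ by C₀(s) = ∫ ν, (Real.log ((1 + F⁻¹·Real.exp (−s² + √2·s·ν)) / (1 + G·Real.exp (−s² + √2·s·ν))) + F⁻¹·Real.log ((1 + F·Real.exp (−s² − √2·s·ν)) / (1 + G⁻¹·Real.exp (−s² − √2·s·ν)))) ∂(gaussianReal 0 1). Then C₀ is strictly increasing on (0, ∞). -/

import Mathlib

open MeasureTheory ProbabilityTheory

/-- The channel penalty term under `H₀` for an AWGN channel, as a function of the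
normalized signaling separation `s`, where `F = (1-α)/α` and `G = (1-β)/β`. -/
noncomputable def awgnPenaltyH0 (F G : ℝ) (s : ℝ) : ℝ :=
  ∫ ν, (Real.log ((1 + F⁻¹ * Real.exp (-s^2 + Real.sqrt 2 * s * ν)) /
          (1 + G * Real.exp (-s^2 + Real.sqrt 2 * s * ν)))
      + F⁻¹ * Real.log ((1 + F * Real.exp (-s^2 - Real.sqrt 2 * s * ν)) /
          (1 + G⁻¹ * Real.exp (-s^2 - Real.sqrt 2 * s * ν)))) ∂(gaussianReal 0 1)

/-!
Write `L` for the likelihood ratio of the two noisy signals. When the first of them is sent, `L` is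
log-normal with mean one and `log L` has variance `v = 2 s²`; when the second is sent, it has
the law of `L⁻¹`, which is also the law of `L` reweighted by `L` itself. Hence `C₀(s)` is an
increasing affine function of `E[φ(L)]`, where `φ(l) = (F + l) log ((F + l) / (1 + G l))` is the
integrand of a Kullback-Leibler divergence. Raising `v` multiplies `L` by an independent
nondegenerate positive factor of mean one, and `φ`, a perspective of `x log x`, is strictly
convex, so `E[φ(L)]` increases by Jensen's inequality.
-/

open Set Filter
open scoped NNReal

section Convexity

lemma strictConvexOn_perspective {E : Type*} [AddCommGroup E] [Module ℝ E] {f : ℝ → ℝ}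
    {s : Set ℝ} {t : Set E} (hf : StrictConvexOn ℝ s f) (ht : Convex ℝ t) (u v : E →ᵃ[ℝ] ℝ)
    (hv : ∀ x ∈ t, 0 < v x) (hmaps : MapsTo (fun x ↦ u x / v x) t s)
    (hinj : InjOn (fun x ↦ u x / v x) t) :
    StrictConvexOn ℝ t fun x ↦ v x * f (u x / v x) := by
  refine ⟨ht, fun x hx y hy hxy a b ha hb hab ↦ ?_⟩
  have hvx := hv x hx
  have hvy := hv y hy
  have hu_combo : u (a • x + b • y) = a * u x + b * u y := Convex.combo_affine_apply hab
  have hv_combo : v (a • x + b • y) = a * v x + b * v y := Convex.combo_affine_apply hab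
  have hratio : (a * u x + b * u y) / (a * v x + b * v y)
      = a * v x / (a * v x + b * v y) * (u x / v x)
        + b * v y / (a * v x + b * v y) * (u y / v y) := by field_simp
  have hlt : f ((a * u x + b * u y) / (a * v x + b * v y))
      < a * v x / (a * v x + b * v y) * f (u x / v x)
        + b * v y / (a * v x + b * v y) * f (u y / v y) := by
    rw [hratio]
    exact hf.2 (hmaps hx) (hmaps hy) (hinj.ne hx hy hxy) (by positivity) (by positivity)
      (by field_simp)
  simp only [hu_combo, hv_combo, smul_eq_mul]
  calc (a * v x + b * v y) * f ((a * u x + b * u y) / (a * v x + b * v y))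
      < (a * v x + b * v y) * (a * v x / (a * v x + b * v y) * f (u x / v x)
          + b * v y / (a * v x + b * v y) * f (u y / v y)) := by gcongr
    _ = a * (v x * f (u x / v x)) + b * (v y * f (u y / v y)) := by field_simp

lemma integral_lt_integral_of_ae_lt {α : Type*} [MeasurableSpace α] {μ : Measure α} [NeZero μ]
    {f g : α → ℝ} (hf : Integrable f μ) (hg : Integrable g μ) (h : ∀ᵐ x ∂μ, f x < g x) :
    ∫ x, f x ∂μ < ∫ x, g x ∂μ := by
  have hle : f ≤ᵐ[μ] g := h.mono fun _ hx ↦ hx.le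
  refine (integral_mono_ae hf hg hle).lt_of_ne fun heq ↦ ?_
  obtain ⟨x, hlt, heq⟩ := (h.and ((integral_eq_iff_of_ae_le hf hg hle).1 heq)).exists
  exact hlt.ne heq

lemma integral_lt_integral_mconv {φ : ℝ → ℝ} (hφ : StrictConvexOn ℝ (Ici 0) φ)
    (hφc : ContinuousOn φ (Ici 0)) {μ ν : Measure ℝ} [SFinite μ] [NeZero μ]
    [IsProbabilityMeasure ν] (hμ : ∀ᵐ x ∂μ, 0 < x) (hν : ∀ᵐ y ∂ν, 0 ≤ y)
    (hmean : ∫ y, y ∂ν = 1) (hnondeg : ¬ ∀ᵐ y ∂ν, y = 1) (hφμ : Integrable φ μ)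
    (hφμν : Integrable φ (μ ∗ₘ ν)) :
    ∫ x, φ x ∂μ < ∫ x, φ x ∂(μ ∗ₘ ν) := by
  rw [integral_mconv hφμν]
  have hslice := ((integrable_mconv_iff hφμν.aestronglyMeasurable).1 hφμν).1
  have houter : Integrable (fun x ↦ ∫ y, φ (x * y) ∂ν) μ :=
    ((integrable_map_measure hφμν.aestronglyMeasurable (by fun_prop)).1 hφμν).integral_prod_left
  refine integral_lt_integral_of_ae_lt hφμ houter ?_
  filter_upwards [hμ, hslice] with x hx hφx
  have hjensen := hφ.ae_eq_const_or_map_average_lt hφc isClosed_Ici (f := fun y ↦ x * y)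
    (hν.mono fun y hy ↦ mul_nonneg hx.le hy)
    ((integrable_of_integral_eq_one hmean).const_mul x) hφx
  rw [average_eq_integral, average_eq_integral, integral_const_mul, hmean, mul_one] at hjensen
  refine hjensen.resolve_left fun hconst ↦ hnondeg ?_
  filter_upwards [hconst] with y hy
  exact (mul_eq_left₀ hx.ne').1 hy

end Convexity

section LogNormal

lemma map_exp_conv (μ ν : Measure ℝ) [SFinite μ] [SFinite ν] :
    (μ ∗ ν).map Real.exp = μ.map Real.exp ∗ₘ ν.map Real.exp := by
  rw [Measure.conv, Measure.mconv, Measure.map_prod_map _ _ (by fun_prop) (by fun_prop),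
    Measure.map_map (by fun_prop) (by fun_prop), Measure.map_map (by fun_prop) (by fun_prop)]
  congr 1 with x
  exact Real.exp_add _ _

lemma integral_exp_smul_gaussianReal {E : Type*} [NormedAddCommGroup E] [NormedSpace ℝ E]
    (m t : ℝ) (v : ℝ≥0) (g : ℝ → E) :
    ∫ x, Real.exp (t * (x - m) - v * t ^ 2 / 2) • g x ∂(gaussianReal m v)
      = ∫ x, g x ∂(gaussianReal (m + v * t) v) := by
  rcases eq_or_ne v 0 with rfl | hv
  · simp only [gaussianReal_zero_var, NNReal.coe_zero, zero_mul, add_zero]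
    refine integral_congr_ae ?_
    simp [ae_dirac_eq, EventuallyEq]
  have hv' : (v : ℝ) ≠ 0 := by exact_mod_cast hv
  rw [integral_gaussianReal_eq_integral_smul hv, integral_gaussianReal_eq_integral_smul hv]
  congr 1 with x
  rw [smul_smul, gaussianPDFReal, gaussianPDFReal, mul_assoc, ← Real.exp_add]
  congr 3
  field_simp
  ring

/-- The log-normal distribution with mean one whose logarithm has variance `v`: the law of the
likelihood ratio of two signals in Gaussian noise when the denominator is the true one. -/
noncomputable def meanOneLogNormal (v : ℝ≥0) : Measure ℝ :=
  (gaussianReal (-v / 2) v).map Real.exp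

instance (v : ℝ≥0) : IsProbabilityMeasure (meanOneLogNormal v) :=
  Measure.isProbabilityMeasure_map (by fun_prop)

lemma meanOneLogNormal_mconv (v w : ℝ≥0) :
    meanOneLogNormal v ∗ₘ meanOneLogNormal w = meanOneLogNormal (v + w) := by
  rw [meanOneLogNormal, meanOneLogNormal, ← map_exp_conv, gaussianReal_conv_gaussianReal,
    meanOneLogNormal]
  congr 2
  push_cast
  ring

lemma ae_pos_meanOneLogNormal (v : ℝ≥0) : ∀ᵐ l ∂meanOneLogNormal v, 0 < l :=
  (ae_map_iff (by fun_prop) measurableSet_Ioi).2 (ae_of_all _ Real.exp_pos)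

lemma not_ae_eq_one_meanOneLogNormal {v : ℝ≥0} (hv : v ≠ 0) :
    ¬ ∀ᵐ l ∂meanOneLogNormal v, l = 1 := by
  have := nullSingletonClass_gaussianReal (μ := -v / 2) hv
  intro h
  rw [meanOneLogNormal, ae_map_iff (p := (· = 1)) (by fun_prop) (measurableSet_singleton 1)] at h
  obtain ⟨x, hx, hx0⟩ := (h.and (Measure.ae_ne (gaussianReal (-v / 2) v) 0)).exists
  exact hx0 ((Real.exp_eq_one_iff x).1 hx)

lemma integral_inv_meanOneLogNormal {E : Type*} [NormedAddCommGroup E] [NormedSpace ℝ E]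
    (v : ℝ≥0) (g : ℝ → E) :
    ∫ l, g l⁻¹ ∂meanOneLogNormal v = ∫ l, l • g l ∂meanOneLogNormal v := by
  have hexp : MeasurableEmbedding Real.exp := Real.isOpenEmbedding_exp.measurableEmbedding
  have hneg : (gaussianReal (-v / 2) v).map (fun x ↦ -x) = gaussianReal (-v / 2 + v * 1) v := by
    rw [gaussianReal_map_neg]
    congr 1
    ring
  calc ∫ l, g l⁻¹ ∂meanOneLogNormal v
      = ∫ x, g (Real.exp (-x)) ∂(gaussianReal (-v / 2) v) := by
        simp only [meanOneLogNormal, hexp.integral_map, Real.exp_neg]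
    _ = ∫ x, g (Real.exp x) ∂(gaussianReal (-v / 2 + v * 1) v) := by
        rw [← hneg, measurableEmbedding_neg.integral_map]
    _ = ∫ x, Real.exp x • g (Real.exp x) ∂(gaussianReal (-v / 2) v) := by
        rw [← integral_exp_smul_gaussianReal]
        congr! 4
        ring
    _ = ∫ l, l • g l ∂meanOneLogNormal v := by
        rw [meanOneLogNormal, hexp.integral_map]

lemma integral_id_meanOneLogNormal (v : ℝ≥0) : ∫ l, l ∂meanOneLogNormal v = 1 := by
  simpa using (integral_inv_meanOneLogNormal v fun _ ↦ (1 : ℝ)).symm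

lemma strictMono_integral_meanOneLogNormal {φ : ℝ → ℝ} (hφ : StrictConvexOn ℝ (Ici 0) φ)
    (hφc : ContinuousOn φ (Ici 0)) (hint : ∀ v, Integrable φ (meanOneLogNormal v)) :
    StrictMono fun v ↦ ∫ l, φ l ∂meanOneLogNormal v := by
  intro v w hvw
  obtain ⟨d, hd, rfl⟩ := exists_pos_add_of_lt' hvw
  simp only [← meanOneLogNormal_mconv v d]
  exact integral_lt_integral_mconv hφ hφc (ae_pos_meanOneLogNormal v)
    ((ae_pos_meanOneLogNormal d).mono fun _ ↦ le_of_lt) (integral_id_meanOneLogNormal d)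
    (not_ae_eq_one_meanOneLogNormal hd.ne') (hint v)
    (meanOneLogNormal_mconv v d ▸ hint (v + d))

lemma hasLaw_exp_gaussianReal {c s : ℝ} (hc : c ^ 2 = 2 * s ^ 2) :
    HasLaw (fun ν ↦ Real.exp (-s ^ 2 + c * ν)) (meanOneLogNormal (2 * ‖s‖₊ ^ 2))
      (gaussianReal 0 1) := by
  have hgauss := (gaussianReal_const_add
    (gaussianReal_const_mul (HasLaw.id (μ := gaussianReal 0 1)) c) (-s ^ 2))
  have hexp : HasLaw Real.exp (meanOneLogNormal (2 * ‖s‖₊ ^ 2))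
      (gaussianReal (-(2 * ‖s‖₊ ^ 2 : ℝ≥0) / 2) (2 * ‖s‖₊ ^ 2)) := ⟨by fun_prop, rfl⟩
  refine hexp.fun_comp (X := fun ν ↦ -s ^ 2 + c * ν) ?_
  convert hgauss using 2
  · simp
  · push_cast
    rw [Real.norm_eq_abs, sq_abs]
    ring
  · ext
    simp [hc]

end LogNormal

section MixtureDivergence

/-- The log-likelihood ratio, up to an additive constant, of the mixtures with (unnormalized)
weights `(F, 1)` and `(1, G)` of two distributions, at a point where the likelihood ratio of the
second distribution to the first is `l`. -/
noncomputable def mixtureLogRatio (F G l : ℝ) : ℝ :=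
  Real.log ((F + l) / (1 + G * l))

/-- The integrand, with respect to the first distribution, of the Kullback-Leibler divergence
between the two mixtures of `mixtureLogRatio`, up to a positive factor and an affine term in `l`
coming from the missing normalization. -/
noncomputable def mixtureDivergence (F G l : ℝ) : ℝ :=
  (F + l) * mixtureLogRatio F G l

variable {F G : ℝ}

lemma measurable_mixtureLogRatio : Measurable (mixtureLogRatio F G) := by
  unfold mixtureLogRatio
  fun_prop

lemma abs_mixtureLogRatio_le (hF : 0 < F) (hG : 0 < G) {l : ℝ} (hl : 0 ≤ l) :
    |mixtureLogRatio F G l| ≤ max |Real.log F| |Real.log G| := by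
  have hden : 0 < 1 + G * l := by positivity
  have hratio : 0 < (F + l) / (1 + G * l) := by positivity
  rw [← abs_neg (Real.log G), ← Real.log_inv]
  rcases le_total F G⁻¹ with hle | hle
  · have hFG : F * G ≤ 1 := by rwa [← le_div_iff₀ hG, one_div]
    refine abs_le_max_abs_abs (Real.log_le_log hF ?_) (Real.log_le_log hratio ?_)
    · rw [le_div_iff₀ hden]
      nlinarith
    · rw [div_le_iff₀ hden, mul_add, inv_mul_cancel_left₀ hG.ne']
      linarith
  · have hFG : 1 ≤ F * G := (inv_le_iff_one_le_mul₀ hG).1 hle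
    rw [max_comm]
    refine abs_le_max_abs_abs (Real.log_le_log (by positivity) ?_) (Real.log_le_log hratio ?_)
    · rw [le_div_iff₀ hden, mul_add, inv_mul_cancel_left₀ hG.ne']
      linarith
    · rw [div_le_iff₀ hden]
      nlinarith

lemma integrable_mixtureLogRatio_comp (hF : 0 < F) (hG : 0 < G) {α : Type*} [MeasurableSpace α]
    {μ : Measure α} [IsFiniteMeasure μ] {X : α → ℝ} (hX : AEMeasurable X μ)
    (hX0 : ∀ᵐ x ∂μ, 0 ≤ X x) : Integrable (fun x ↦ mixtureLogRatio F G (X x)) μ :=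
  .of_bound (measurable_mixtureLogRatio.comp_aemeasurable hX).aestronglyMeasurable _
    (hX0.mono fun _ ↦ abs_mixtureLogRatio_le hF hG)

lemma integrable_mul_mixtureLogRatio (hF : 0 < F) (hG : 0 < G) {μ : Measure ℝ}
    (hμ : ∀ᵐ l ∂μ, 0 ≤ l) (hint : Integrable (fun l ↦ l) μ) :
    Integrable (fun l ↦ l * mixtureLogRatio F G l) μ :=
  hint.mul_bdd measurable_mixtureLogRatio.aestronglyMeasurable
    (hμ.mono fun _ ↦ abs_mixtureLogRatio_le hF hG)

lemma continuousOn_mixtureDivergence (hF : 0 < F) (hG : 0 < G) :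
    ContinuousOn (mixtureDivergence F G) (Ici 0) := by
  unfold mixtureDivergence mixtureLogRatio
  have hden : ∀ l ∈ Ici (0 : ℝ), 1 + G * l ≠ 0 := fun l (hl : 0 ≤ l) ↦ by positivity
  have hratio : ∀ l ∈ Ici (0 : ℝ), (F + l) / (1 + G * l) ≠ 0 :=
    fun l (hl : 0 ≤ l) ↦ by positivity
  fun_prop (disch := assumption)

lemma strictConvexOn_mixtureDivergence (hF : 0 < F) (hG : 0 < G) (hFG : F * G ≠ 1) :
    StrictConvexOn ℝ (Ici 0) (mixtureDivergence F G) := by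
  let num : ℝ →ᵃ[ℝ] ℝ := AffineMap.const ℝ ℝ F + AffineMap.id ℝ ℝ
  let den : ℝ →ᵃ[ℝ] ℝ := AffineMap.const ℝ ℝ 1 + G • AffineMap.id ℝ ℝ
  have hden : ∀ l ∈ Ici (0 : ℝ), 0 < den l := fun l (hl : 0 ≤ l) ↦ by
    change 0 < 1 + G * l
    positivity
  have hinj : InjOn (fun l ↦ num l / den l) (Ici 0) := by
    intro x hx y hy (hxy : num x / den x = num y / den y)
    rw [div_eq_div_iff (hden x hx).ne' (hden y hy).ne'] at hxy
    change (F + x) * (1 + G * y) = (F + y) * (1 + G * x) at hxy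
    refine mul_left_cancel₀ (sub_ne_zero.2 hFG) ?_
    linear_combination -hxy
  refine (strictConvexOn_perspective Real.strictConvexOn_mul_log (convex_Ici 0) num den hden
    (fun l hl ↦ ?_) hinj).congr fun l hl ↦ ?_
  · exact div_nonneg (add_nonneg hF.le hl) (hden l hl).le
  · change den l * (num l / den l * mixtureLogRatio F G l) = num l * mixtureLogRatio F G l
    rw [← mul_assoc, mul_div_cancel₀ _ (hden l hl).ne']

lemma integrable_mixtureDivergence (hF : 0 < F) (hG : 0 < G) {μ : Measure ℝ} [IsFiniteMeasure μ]
    (hμ : ∀ᵐ l ∂μ, 0 ≤ l) (hint : Integrable (fun l ↦ l) μ) :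
    Integrable (mixtureDivergence F G) μ := by
  have hratio := integrable_mixtureLogRatio_comp hF hG (by fun_prop) hμ
  refine ((hratio.const_mul F).add (integrable_mul_mixtureLogRatio hF hG hμ hint)).congr ?_
  exact ae_of_all _ fun l ↦ (add_mul F l (mixtureLogRatio F G l)).symm

end MixtureDivergence

section AWGN

variable {F G : ℝ}

lemma log_one_add_inv_mul_div (hF : 0 < F) (hG : 0 < G) {l : ℝ} (hl : 0 < l) :
    Real.log ((1 + F⁻¹ * l) / (1 + G * l)) = mixtureLogRatio F G l - Real.log F := by
  rw [mixtureLogRatio, ← Real.log_div (by positivity) hF.ne']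
  congr 1
  field_simp

lemma log_one_add_mul_div_inv (hF : 0 < F) (hG : 0 < G) {l : ℝ} (hl : 0 < l) :
    Real.log ((1 + F * l) / (1 + G⁻¹ * l)) = mixtureLogRatio F G l⁻¹ + Real.log G := by
  rw [mixtureLogRatio, ← Real.log_mul (by positivity) hG.ne']
  congr 1
  field_simp
  ring

lemma integral_mixtureDivergence_meanOneLogNormal (hF : 0 < F) (hG : 0 < G) (v : ℝ≥0) :
    ∫ l, mixtureDivergence F G l ∂meanOneLogNormal v
      = F * ∫ l, mixtureLogRatio F G l ∂meanOneLogNormal v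
        + ∫ l, mixtureLogRatio F G l⁻¹ ∂meanOneLogNormal v := by
  have hnonneg : ∀ᵐ l ∂meanOneLogNormal v, 0 ≤ l :=
    (ae_pos_meanOneLogNormal v).mono fun _ ↦ le_of_lt
  have hratio : Integrable (mixtureLogRatio F G) (meanOneLogNormal v) :=
    integrable_mixtureLogRatio_comp hF hG (by fun_prop) hnonneg
  have hmul := integrable_mul_mixtureLogRatio hF hG hnonneg
    (integrable_of_integral_eq_one (integral_id_meanOneLogNormal v))
  simp only [mixtureDivergence, add_mul, integral_inv_meanOneLogNormal, smul_eq_mul]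
  rw [integral_add (hratio.const_mul F) hmul, integral_const_mul]

lemma awgnPenaltyH0_eq_integral_mixtureLogRatio (hF : 0 < F) (hG : 0 < G) (s : ℝ) :
    awgnPenaltyH0 F G s
      = ((∫ l, mixtureLogRatio F G l ∂meanOneLogNormal (2 * ‖s‖₊ ^ 2)) - Real.log F)
        + F⁻¹ * ((∫ l, mixtureLogRatio F G l⁻¹ ∂meanOneLogNormal (2 * ‖s‖₊ ^ 2))
          + Real.log G) := by
  let p : ℝ → ℝ := fun ν ↦ Real.exp (-s ^ 2 + √2 * s * ν)
  let q : ℝ → ℝ := fun ν ↦ Real.exp (-s ^ 2 - √2 * s * ν)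
  have hp : HasLaw p (meanOneLogNormal (2 * ‖s‖₊ ^ 2)) (gaussianReal 0 1) :=
    hasLaw_exp_gaussianReal (by simp [mul_pow])
  have hq : HasLaw q (meanOneLogNormal (2 * ‖s‖₊ ^ 2)) (gaussianReal 0 1) := by
    simpa only [neg_mul, ← sub_eq_add_neg] using
      hasLaw_exp_gaussianReal (c := -(√2 * s)) (s := s) (by simp [mul_pow])
  have hint_p : Integrable (fun ν ↦ mixtureLogRatio F G (p ν)) (gaussianReal 0 1) :=
    integrable_mixtureLogRatio_comp hF hG hp.aemeasurable (ae_of_all _ fun _ ↦ by positivity)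
  have hint_q : Integrable (fun ν ↦ mixtureLogRatio F G (q ν)⁻¹) (gaussianReal 0 1) :=
    integrable_mixtureLogRatio_comp hF hG hq.aemeasurable.inv
      (ae_of_all _ fun _ ↦ by positivity)
  have hmean_p : ∫ ν, mixtureLogRatio F G (p ν) ∂(gaussianReal 0 1)
      = ∫ l, mixtureLogRatio F G l ∂meanOneLogNormal (2 * ‖s‖₊ ^ 2) :=
    hp.integral_comp measurable_mixtureLogRatio.aestronglyMeasurable
  have hmean_q : ∫ ν, mixtureLogRatio F G (q ν)⁻¹ ∂(gaussianReal 0 1)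
      = ∫ l, mixtureLogRatio F G l⁻¹ ∂meanOneLogNormal (2 * ‖s‖₊ ^ 2) :=
    hq.integral_comp (measurable_mixtureLogRatio.comp measurable_inv).aestronglyMeasurable
  calc awgnPenaltyH0 F G s
      = ∫ ν, ((mixtureLogRatio F G (p ν) - Real.log F)
          + F⁻¹ * (mixtureLogRatio F G (q ν)⁻¹ + Real.log G)) ∂(gaussianReal 0 1) := by
        simp only [awgnPenaltyH0, p, q, log_one_add_inv_mul_div hF hG (Real.exp_pos _),
          log_one_add_mul_div_inv hF hG (Real.exp_pos _)]
    _ = ((∫ ν, mixtureLogRatio F G (p ν) ∂(gaussianReal 0 1)) - Real.log F)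
        + F⁻¹ * ((∫ ν, mixtureLogRatio F G (q ν)⁻¹ ∂(gaussianReal 0 1)) + Real.log G) := by
        rw [integral_add (by fun_prop) (by fun_prop), integral_sub hint_p (by fun_prop),
          integral_const_mul, integral_add hint_q (by fun_prop)]
        simp only [integral_const, probReal_univ, one_smul]
    _ = _ := by rw [hmean_p, hmean_q]

lemma awgnPenaltyH0_eq_integral_mixtureDivergence (hF : 0 < F) (hG : 0 < G) (s : ℝ) :
    awgnPenaltyH0 F G s
      = F⁻¹ * ∫ l, mixtureDivergence F G l ∂meanOneLogNormal (2 * ‖s‖₊ ^ 2)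
        + (F⁻¹ * Real.log G - Real.log F) := by
  rw [awgnPenaltyH0_eq_integral_mixtureLogRatio hF hG,
    integral_mixtureDivergence_meanOneLogNormal hF hG]
  field_simp
  ring

end AWGN

theorem awgnPenaltyH0_strictMonoOn_general (F G : ℝ) (hF : 0 < F) (hG : 0 < G)
    (hFG : F * G ≠ 1) : StrictMonoOn (awgnPenaltyH0 F G) (Ici 0) := by
  have hmono := strictMono_integral_meanOneLogNormal
    (strictConvexOn_mixtureDivergence hF hG hFG) (continuousOn_mixtureDivergence hF hG) fun v ↦
      integrable_mixtureDivergence hF hG ((ae_pos_meanOneLogNormal v).mono fun _ ↦ le_of_lt)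
        (integrable_of_integral_eq_one (integral_id_meanOneLogNormal v))
  intro s (hs : 0 ≤ s) t (ht : 0 ≤ t) hst
  have hvar : 2 * ‖s‖₊ ^ 2 < 2 * ‖t‖₊ ^ 2 := by
    gcongr
    rwa [← NNReal.coe_lt_coe, coe_nnnorm, coe_nnnorm, Real.norm_of_nonneg hs,
      Real.norm_of_nonneg ht]
  simp only [awgnPenaltyH0_eq_integral_mixtureDivergence hF hG]
  gcongr
  exact hmono hvar

/-- Lemma 2 of the paper, `H₀` case: if `F, G > 1`, `F² ≥ G` and `G² ≥ F`, then the AWGN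
channel penalty term `C₀` is strictly increasing in the signaling separation `s > 0`. -/
theorem awgnPenaltyH0_strictMonoOn (F G : ℝ) (hF : 1 < F) (hG : 1 < G)
    (hF2G : G ≤ F^2) (hG2F : F ≤ G^2) :
    StrictMonoOn (awgnPenaltyH0 F G) (Set.Ioi (0 : ℝ)) :=
  (awgnPenaltyH0_strictMonoOn_general F G (by positivity) (by positivity)
    (one_lt_mul hF.le hG).ne').mono Ioi_subset_Ici_self
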